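/- arXiv:1501.04370 — 3 statements merged into one kernel-verified Lean document; each statement's English description precedes it below -/
import Mathlib

section
/- Assume α_i(S) > 0 for every i ∈ V and S ⊆ V \ {i}. Let n = |V|, let 1 ≤ k ≤ n, and let σ_k, σ_{k+1}, …, σ_n be distinct elements of V; for k ≤ m ≤ n set U_{σ_m} := V \ {σ_m, …, σ_n}, and define the joint weight P(σ_k, …, σ_n) := Σ over all linear orderings ≺ of V whose last n − k + 1 elements are, in order, σ_k, …, σ_n, of Π_{i ∈ V} α_i(U_i^≺) (for k = n + 1, i.e. an empty suffix, this sum is over all linear orderings of V and equals L(V)). Then the conditional probability of σ_k given the suffix σ_{k+1}, …, σ_n, namely P(σ_k, σ_{k+1}, …, σ_n) / P(σ_{k+1}, …, σ_n), is well defined and equals L(U_{σ_k}) · α_{σ_k}(U_{σ_k}) / L(U_{σ_k} ∪ {σ_k}). -/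
/-- The finite set of elements of the list `l` strictly preceding the element `i`
(the prefix of `l` before the first occurrence of `i`). -/
def predSet {ι : Type*} [DecidableEq ι] (l : List ι) (i : ι) : Finset ι :=
  (l.takeWhile (fun a => decide (a ≠ i))).toFinset

/-- All linear orderings of the finite set `S`, i.e. all lists enumerating the
elements of `S` without repetition. -/
noncomputable def orderings {ι : Type*} [DecidableEq ι] (S : Finset ι) : Finset (List ι) :=
  S.toList.permutations.toFinset

/-- `L(S)`: the sum over all linear orderings `(σ₁, …, σ_k)` of `S` of
`∏_{j=1}^{k} α_{σ_j}({σ₁, …, σ_{j−1}})`, with `L(∅) = 1`. -/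
noncomputable def Lfun {ι : Type*} [DecidableEq ι] (α : ι → Finset ι → ℝ) (S : Finset ι) : ℝ :=
  ∑ l ∈ orderings S, ∏ i ∈ S, α i (predSet l i)

/-- The joint weight `P(σ_k, …, σ_n)` of a suffix `s = (σ_k, …, σ_n)`: the sum, over all
linear orderings `≺` of `V` whose last elements are, in order, the elements of `s`, of
`∏_{i ∈ V} α_i(U_i^≺)`.  (For the empty suffix this is the sum over all linear orderings
of `V`, which equals `L(V)`.) -/
noncomputable def jointWeight {ι : Type*} [DecidableEq ι] (α : ι → Finset ι → ℝ)
    (V : Finset ι) (s : List ι) : ℝ :=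
  ∑ l ∈ (orderings V).filter (fun l => s <:+ l), ∏ i ∈ V, α i (predSet l i)

theorem mem_orderings_aux {ι : Type*} [DecidableEq ι] (S : Finset ι) (l : List ι) :
    l ∈ orderings S ↔ l.Nodup ∧ l.toFinset = S := by
  unfold orderings
  rw [List.mem_toFinset, List.mem_permutations]
  constructor
  · intro h
    refine ⟨h.nodup_iff.mpr S.nodup_toList, ?_⟩
    rw [List.toFinset_eq_of_perm _ _ h, Finset.toList_toFinset]
  · rintro ⟨h, rfl⟩
    exact (List.toFinset_toList h).symm

theorem predSet_append_left {ι : Type*} [DecidableEq ι] (t s : List ι) (i : ι) (h : i ∈ t) :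
    predSet (t ++ s) i = predSet t i := by
  induction t with
  | nil => simp at h
  | cons a t ih =>
    unfold predSet at *
    by_cases hai : a = i
    · simp [hai]
    · have : i ∈ t := by
        rcases List.mem_cons.mp h with h | h
        · exact absurd h.symm hai
        · exact h
      have := ih this
      simp_all

theorem predSet_append_right {ι : Type*} [DecidableEq ι] (t s : List ι) (i : ι) (h : i ∉ t) :
    predSet (t ++ s) i = t.toFinset ∪ predSet s i := by
  induction t with
  | nil => simp [predSet]
  | cons a t ih =>
    unfold predSet at *
    have hai : a ≠ i := fun e => h (by simp [e])
    have := ih (fun e => h (by simp [e]))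
    simp_all

theorem predSet_sub {ι : Type*} [DecidableEq ι] (l : List ι) (i : ι) :
    predSet l i ⊆ l.toFinset ∧ i ∉ predSet l i := by
  unfold predSet
  constructor
  · intro x hx
    rw [List.mem_toFinset] at *
    exact (List.takeWhile_sublist _).subset hx
  · intro hx
    rw [List.mem_toFinset] at hx
    simpa using List.mem_takeWhile_imp hx

theorem Lfun_pos_aux {ι : Type*} [DecidableEq ι] (α : ι → Finset ι → ℝ)
    (V : Finset ι) (hα : ∀ i ∈ V, ∀ S ⊆ V, i ∉ S → 0 < α i S) (S : Finset ι) (hS : S ⊆ V) :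
    0 < Lfun α S := by
  unfold Lfun
  apply Finset.sum_pos
  · intro l hl
    rw [mem_orderings_aux] at hl
    refine Finset.prod_pos fun i hi => hα i (hS hi) _ ?_ (predSet_sub l i).2
    exact (predSet_sub l i).1.trans (hl.2 ▸ hS)
  · exact ⟨S.toList, by simp [mem_orderings_aux, Finset.nodup_toList]⟩

theorem jointWeight_eq_aux {ι : Type*} [DecidableEq ι] (α : ι → Finset ι → ℝ)
    (V : Finset ι) (s : List ι) (hnd : s.Nodup) (hsub : s.toFinset ⊆ V) :
    jointWeight α V s = Lfun α (V \ s.toFinset) *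
      ∏ i ∈ s.toFinset, α i ((V \ s.toFinset) ∪ predSet s i) := by
  unfold jointWeight Lfun
  rw [Finset.sum_mul]
  symm
  apply Finset.sum_bij (fun t _ => t ++ s)
  · intro t ht
    rw [mem_orderings_aux] at ht
    rw [Finset.mem_filter, mem_orderings_aux]
    refine ⟨⟨?_, ?_⟩, List.suffix_append _ _⟩
    · refine List.nodup_append'.mpr ⟨ht.1, hnd, ?_⟩
      intro x hx hxs
      have : x ∈ V \ s.toFinset := ht.2 ▸ List.mem_toFinset.mpr hx
      simp [hxs] at this
    · rw [List.toFinset_append, ht.2, Finset.sdiff_union_of_subset hsub]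
  · intro a _ b _ h
    exact List.append_cancel_right h
  · intro l hl
    rw [Finset.mem_filter, mem_orderings_aux] at hl
    obtain ⟨⟨h1, h2⟩, t, rfl⟩ := hl
    have h3 := List.nodup_append'.mp h1
    refine ⟨t, ?_, rfl⟩
    rw [mem_orderings_aux]
    refine ⟨h3.1, ?_⟩
    ext x
    have := @h3.2.2 x
    rw [← h2]
    simp only [List.mem_toFinset, Finset.mem_sdiff, List.mem_append]
    tauto
  · intro t ht
    rw [mem_orderings_aux] at ht
    rw [← Finset.prod_sdiff hsub]
    congr 1
    · refine Finset.prod_congr rfl fun i hi => ?_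
      rw [predSet_append_left]
      rwa [← ht.2, List.mem_toFinset] at hi
    · refine Finset.prod_congr rfl fun i hi => ?_
      rw [predSet_append_right, ht.2]
      intro h
      rw [← List.mem_toFinset, ht.2] at h
      exact (Finset.mem_sdiff.mp h).2 hi

/-- Assume `α_i(S) > 0` for every `i ∈ V` and `S ⊆ V \ {i}`.  Let `σ_k, σ_{k+1}, …, σ_n`
be distinct elements of `V` (the list `σₖ :: s`), and set `U := V \ {σ_k, …, σ_n}`
(which is `U_{σ_k}`).  Then the conditional probability of `σ_k` given the suffix
`σ_{k+1}, …, σ_n`, namely `P(σ_k, σ_{k+1}, …, σ_n) / P(σ_{k+1}, …, σ_n)`, is well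
defined (the denominator is nonzero) and equals
`L(U) · α_{σ_k}(U) / L(U ∪ {σ_k})`. -/
theorem conditional_sampling_prob {ι : Type*} [DecidableEq ι] (α : ι → Finset ι → ℝ)
    (V : Finset ι) (hα : ∀ i ∈ V, ∀ S ⊆ V, i ∉ S → 0 < α i S)
    (σₖ : ι) (s : List ι) (hnd : (σₖ :: s).Nodup) (hsub : (σₖ :: s).toFinset ⊆ V) :
    jointWeight α V s ≠ 0 ∧
      jointWeight α V (σₖ :: s) / jointWeight α V s
        = Lfun α (V \ (σₖ :: s).toFinset) * α σₖ (V \ (σₖ :: s).toFinset)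
            / Lfun α (insert σₖ (V \ (σₖ :: s).toFinset)) := by
  have hnd' := List.nodup_cons.mp hnd
  have hσ : σₖ ∈ V := hsub (by simp)
  have hsub' : s.toFinset ⊆ V := fun x hx => hsub (by simp at hx ⊢; exact Or.inr hx)
  have hU : insert σₖ (V \ (σₖ :: s).toFinset) = V \ s.toFinset := by
    ext x
    by_cases hx : x = σₖ
    · subst hx; simp [hσ, hnd'.1]
    · simp [hx]
  have hC : ∏ i ∈ (σₖ :: s).toFinset, α i ((V \ (σₖ :: s).toFinset) ∪ predSet (σₖ :: s) i)
      = α σₖ (V \ (σₖ :: s).toFinset) *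
        ∏ i ∈ s.toFinset, α i ((V \ s.toFinset) ∪ predSet s i) := by
    rw [← hU]
    generalize V \ (σₖ :: s).toFinset = U
    rw [List.toFinset_cons, Finset.prod_insert (by simpa using hnd'.1)]
    congr 1
    · simp [predSet]
    · refine Finset.prod_congr rfl fun i hi => ?_
      have hne : i ∉ [σₖ] := by
        intro h
        rw [List.mem_singleton] at h
        subst h
        exact hnd'.1 (List.mem_toFinset.mp hi)
      have := predSet_append_right [σₖ] s i hne
      rw [List.singleton_append] at this
      rw [this]
      congr 1
      ext x
      simp
  have hCpos : 0 < ∏ i ∈ s.toFinset, α i ((V \ s.toFinset) ∪ predSet s i) := by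
    refine Finset.prod_pos fun i hi => hα i (hsub' hi) _ ?_ ?_
    · exact Finset.union_subset Finset.sdiff_subset ((predSet_sub s i).1.trans hsub')
    · rw [Finset.mem_union, not_or]
      exact ⟨fun h => (Finset.mem_sdiff.mp h).2 hi, (predSet_sub s i).2⟩
  have hL := Lfun_pos_aux α V hα (V \ s.toFinset) Finset.sdiff_subset
  rw [jointWeight_eq_aux α V s hnd'.2 hsub', jointWeight_eq_aux α V _ hnd hsub, hC, hU]
  refine ⟨(mul_pos hL hCpos).ne', ?_⟩
  rw [← mul_assoc, mul_div_mul_right _ _ hCpos.ne']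
end

section
/- For every parent-set vector G = (Pa_i)_{i∈V} with Pa_i ⊆ V \ {i} for all i, the marginal probability of drawing G by the two-stage procedure — first draw a linear ordering ≺ with probability P_ord(≺) = Π_{i∈V} α_i(U_i^≺) / L(V), then, given ≺, draw independently for each i ∈ V a parent set Pa_i ⊆ U_i^≺ with probability β_i(Pa_i) / Σ_{Pa ⊆ U_i^≺} β_i(Pa) — equals p_≺(G|D) := Σ_{≺ : G ⊆ ≺} Π_{i∈V} q_i(U_i^≺) β_i(Pa_i) / L(V); that is, Σ_{≺ : G ⊆ ≺} P_ord(≺) · Π_{i∈V} [ β_i(Pa_i) q_i(U_i^≺) / α_i(U_i^≺) ] = p_≺(G|D), and hence N independent repetitions of the procedure yield N independent, identically distributed DAG samples with probability mass function p_≺(·|D). -/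
/-- `α_i(S) := q_i(S) · Σ_{Pa ⊆ S} β_i(Pa)`. -/
noncomputable def alpha {ι : Type*} [DecidableEq ι] (q β : ι → Finset ι → ℝ)
    (i : ι) (S : Finset ι) : ℝ :=
  q i S * ∑ Pa ∈ S.powerset, β i Pa

/-- For every parent-set vector `G = (Pa_i)_{i∈V}` with `Pa_i ⊆ V \ {i}` for all `i`, the
marginal probability of drawing `G` by the two-stage procedure — first draw a linear
ordering `≺` with probability `P_ord(≺) = Π_{i∈V} α_i(U_i^≺) / L(V)`, then, given `≺`,
draw independently for each `i ∈ V` a parent set `Pa_i ⊆ U_i^≺` with probability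
`β_i(Pa_i) / Σ_{Pa ⊆ U_i^≺} β_i(Pa) = β_i(Pa_i)·q_i(U_i^≺)/α_i(U_i^≺)` — equals
`p_≺(G|D) := Σ_{≺ : G ⊆ ≺} Π_{i∈V} q_i(U_i^≺) β_i(Pa_i) / L(V)`; that is,
`Σ_{≺ : G ⊆ ≺} P_ord(≺) · Π_{i∈V} [ β_i(Pa_i) q_i(U_i^≺) / α_i(U_i^≺) ] = p_≺(G|D)`.
Consequently, independent repetitions of the procedure yield independent, identically
distributed DAG samples with probability mass function `p_≺(·|D)`. -/
theorem dds_marginal_eq_posterior {ι : Type*} [DecidableEq ι]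
    (q β : ι → Finset ι → ℝ) (V : Finset ι)
    (hq : ∀ i ∈ V, ∀ S ⊆ V.erase i, 0 < q i S)
    (hβ : ∀ i ∈ V, ∀ S ⊆ V.erase i, 0 ≤ β i S)
    (hβsum : ∀ i ∈ V, ∀ S ⊆ V.erase i, 0 < ∑ Pa ∈ S.powerset, β i Pa)
    (G : ι → Finset ι) (hG : ∀ i ∈ V, G i ⊆ V.erase i) :
    ∑ l ∈ (orderings V).filter (fun l => ∀ i ∈ V, G i ⊆ predSet l i),
        ((∏ i ∈ V, alpha q β i (predSet l i)) / Lfun (alpha q β) V)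
          * ∏ i ∈ V, (β i (G i) * q i (predSet l i) / alpha q β i (predSet l i))
      = (∑ l ∈ (orderings V).filter (fun l => ∀ i ∈ V, G i ⊆ predSet l i),
          ∏ i ∈ V, q i (predSet l i) * β i (G i)) / Lfun (alpha q β) V := by
  rw [Finset.sum_div]
  refine Finset.sum_congr rfl fun l hl => ?_
  have hperm : l.Perm V.toList := by
    have h := (Finset.mem_filter.1 hl).1
    simpa [orderings] using h
  have hpred : ∀ i, predSet l i ⊆ V.erase i := by
    intro i a ha
    have ha' : a ∈ l.takeWhile (fun a => decide (a ≠ i)) := by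
      simpa only [predSet, List.mem_toFinset] using ha
    have h1 : a ≠ i := by simpa using List.mem_takeWhile_imp ha'
    have h2 : a ∈ l := (List.takeWhile_sublist _).subset ha'
    exact Finset.mem_erase.2 ⟨h1, Finset.mem_toList.1 (hperm.mem_iff.1 h2)⟩
  rw [div_mul_eq_mul_div, ← Finset.prod_mul_distrib]
  congr 1
  refine Finset.prod_congr rfl fun i hi => ?_
  have hα : alpha q β i (predSet l i) ≠ 0 :=
    (mul_pos (hq i hi _ (hpred i)) (hβsum i hi _ (hpred i))).ne'
  rw [mul_div_cancel₀ _ hα, mul_comm]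
end

section
/- Let 𝒢 ⊆ Ω be any subset with Σ_{G∈𝒢} w(G) > 0, and define the cumulative posterior mass Δ := Σ_{G∈𝒢} w(G) / Σ_{G∈Ω} w(G) and the estimator p̂ := Σ_{G∈𝒢} f(G)·w(G) / Σ_{G∈𝒢} w(G). Then Δ·p̂ ≤ p ≤ Δ·p̂ + 1 − Δ; equivalently, −(1 − Δ)·p̂ ≤ p − p̂ ≤ (1 − Δ)·(1 − p̂). -/
/-- Let `Ω` be a finite nonempty type, `w : Ω → ℝ` nonnegative weights with
`Σ_{G∈Ω} w(G) > 0`, `f : Ω → {0,1}` a feature, and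
`p := Σ_{G∈Ω} f(G)·w(G) / Σ_{G∈Ω} w(G)`.  Let `𝒢 ⊆ Ω` be any subset with
`Σ_{G∈𝒢} w(G) > 0`, and define the cumulative posterior mass
`Δ := Σ_{G∈𝒢} w(G) / Σ_{G∈Ω} w(G)` and the estimator
`p̂ := Σ_{G∈𝒢} f(G)·w(G) / Σ_{G∈𝒢} w(G)`.  Then
`Δ·p̂ ≤ p ≤ Δ·p̂ + 1 − Δ`; equivalently,
`−(1 − Δ)·p̂ ≤ p − p̂ ≤ (1 − Δ)·(1 − p̂)`. -/
theorem sound_interval {Ω : Type*} [Fintype Ω] [Nonempty Ω]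
    (w : Ω → ℝ) (hw0 : ∀ g, 0 ≤ w g) (hw : 0 < ∑ g, w g)
    (f : Ω → ℝ) (hf : ∀ g, f g = 0 ∨ f g = 1)
    (𝒢 : Finset Ω) (h𝒢 : 0 < ∑ g ∈ 𝒢, w g) :
    ((∑ g ∈ 𝒢, w g) / ∑ g, w g) * ((∑ g ∈ 𝒢, f g * w g) / ∑ g ∈ 𝒢, w g)
        ≤ (∑ g, f g * w g) / ∑ g, w g ∧
      (∑ g, f g * w g) / ∑ g, w g
        ≤ ((∑ g ∈ 𝒢, w g) / ∑ g, w g) * ((∑ g ∈ 𝒢, f g * w g) / ∑ g ∈ 𝒢, w g)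
            + 1 - (∑ g ∈ 𝒢, w g) / ∑ g, w g := by
  have h1 : ∑ g ∈ 𝒢, f g * w g ≤ ∑ g, f g * w g := by
    apply Finset.sum_le_sum_of_subset_of_nonneg (Finset.subset_univ _)
    intro g _ _
    rcases hf g with h | h <;> simp [h, hw0 g]
  have h2 : ∑ g ∈ 𝒢, (w g - f g * w g) ≤ ∑ g, (w g - f g * w g) := by
    apply Finset.sum_le_sum_of_subset_of_nonneg (Finset.subset_univ _)
    intro g _ _
    rcases hf g with h | h <;> simp [h, hw0 g]
  rw [Finset.sum_sub_distrib, Finset.sum_sub_distrib] at h2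
  have h3 : ((∑ g ∈ 𝒢, w g) / ∑ g, w g) * ((∑ g ∈ 𝒢, f g * w g) / ∑ g ∈ 𝒢, w g)
      = (∑ g ∈ 𝒢, f g * w g) / ∑ g, w g := by
    have := h𝒢.ne'
    have := hw.ne'
    field_simp
  rw [h3]
  refine ⟨div_le_div_of_nonneg_right h1 hw.le, ?_⟩
  have h4 : (∑ g ∈ 𝒢, f g * w g) / ∑ g, w g + 1 - (∑ g ∈ 𝒢, w g) / ∑ g, w g
      = ((∑ g ∈ 𝒢, f g * w g) + ∑ g, w g - ∑ g ∈ 𝒢, w g) / ∑ g, w g := by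
    rw [sub_div, add_div, div_self hw.ne']
  rw [h4]
  exact div_le_div_of_nonneg_right (by linarith) hw.le
end
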